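/- Let D = π₁⋯πₙ with πₖ ≡ 1 (mod 12) distinct primes of ℤ[τ], let D_T be a divisor of D as a subproduct of the πₖ, and let c ∈ O_K be relatively prime to D. Then the Hecke character ψ_{D_T³} attached to E_{D_T³}: y² = x³ + D_T³ satisfies ψ_{D_T³}(6c + D) = (D_T/(6c+D))₂ · (6c + D), where (·/·)₂ is the quadratic residue symbol in K = ℚ(√−3). -/

import Mathlib

noncomputable section

open Complex Real ComplexConjugate

/-- `τ = (−1+√−3)/2`, a primitive cube root of unity. -/
def tau : ℂ := (-1 + Real.sqrt 3 * Complex.I) / 2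

/-- `√−3 = 1 + 2τ`, the square root of `−3` with positive imaginary part. -/
def sqrtm3 : ℂ := Real.sqrt 3 * Complex.I

/-- The ring of integers `O_K = ℤ[τ]` of `K = ℚ(√−3)`, as a subring of `ℂ`. -/
def Eis : Subring ℂ := Subring.closure {tau}

/-- `τ` as an element of `ℤ[τ]`. -/
def tauO : Eis := ⟨tau, Subring.subset_closure rfl⟩

/-- `√−3` as an element of `ℤ[τ]`. -/
def sqrtm3O : Eis := 1 + 2 * tauO

/-- Membership in the lattice `L_ω = ω·ℤ[τ]`. -/
def inLattice (ω : ℝ) (z : ℂ) : Prop := ∃ a : Eis, z = (ω : ℂ) * a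

/-- The Weierstrass `℘`-function of the lattice `L_ω = ω·ℤ[τ]`. -/
def wp (ω : ℝ) (z : ℂ) : ℂ :=
  1 / z ^ 2 + ∑' a : {w : ℂ // inLattice ω w ∧ w ≠ 0},
    (1 / (z - (a : ℂ)) ^ 2 - 1 / (a : ℂ) ^ 2)

/-- The Weierstrass `ζ`-function of the lattice `L_ω = ω·ℤ[τ]`. -/
def wzeta (ω : ℝ) (z : ℂ) : ℂ :=
  1 / z + ∑' a : {w : ℂ // inLattice ω w ∧ w ≠ 0},
    (1 / (z - (a : ℂ)) + 1 / (a : ℂ) + z / (a : ℂ) ^ 2)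

/-- The real cube root of 2, as a complex number. -/
def cbrt2 : ℂ := ((2 : ℝ) ^ ((1 : ℝ) / 3) : ℝ)

/-- The real cube root of 4, as a complex number. -/
def cbrt4 : ℂ := ((4 : ℝ) ^ ((1 : ℝ) / 3) : ℝ)


/-- Characterization of the quadratic residue symbol `(x/d)₂` in `K = ℚ(√−3)`,
taking values in `ℤ[τ]`: it is multiplicative in the denominator, equals `1` on unit
denominators, and on odd prime denominators `p` it is the unique element of `{1, −1}`
congruent to `x^((Np−1)/2)` modulo `p`. -/
def IsQuadSym (q : Eis → Eis → Eis) : Prop :=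
  (∀ x d e, q x (d * e) = q x d * q x e) ∧
  (∀ x u, IsUnit u → q x u = 1) ∧
  (∀ x p, Prime p → IsCoprime p 2 → IsCoprime x p →
    (q x p = 1 ∨ q x p = -1) ∧
    ∀ m : ℕ, Complex.normSq (p : ℂ) = (m : ℝ) → p ∣ (q x p - x ^ ((m - 1) / 2)))

/-- Characterization of the sextic residue symbol `(x/d)₆` in `K = ℚ(√−3)`,
taking values in `ℤ[τ]`: it is multiplicative in the denominator, equals `1` on unit
denominators, and on prime denominators `p` coprime to `6` it is the unique sixth root
of unity congruent to `x^((Np−1)/6)` modulo `p`. -/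
def IsHexSym (h : Eis → Eis → Eis) : Prop :=
  (∀ x d e, h x (d * e) = h x d * h x e) ∧
  (∀ x u, IsUnit u → h x u = 1) ∧
  (∀ x p, Prime p → IsCoprime p 6 → IsCoprime x p →
    (h x p) ^ 6 = 1 ∧
    ∀ m : ℕ, Complex.normSq (p : ℂ) = (m : ℝ) → p ∣ (h x p - x ^ ((m - 1) / 6)))

/-- `ψ` is the Hecke character (Grössencharacter) of `K = ℚ(√−3)` attached to the
elliptic curve `y² = x³ + DT³`, viewed on elements of `O_K = ℤ[τ]` (extended by `0`
off ideals coprime to the conductor `(2√−3·DT)`): it is multiplicative, depends only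
on the ideal generated by its argument, its value divided by its argument depends only
on the argument modulo `2√−3·DT`, and for `α ≡ 1 (mod 6)` coprime to `6·DT` it is given
by `ψ(α) = conj((4DT³/α)₆)·α` (`hex` being the sextic residue symbol). -/
def IsAttachedHecke (DT : Eis) (hex : Eis → Eis → Eis) (ψ : Eis → ℂ) : Prop :=
  (∀ α β, ψ (α * β) = ψ α * ψ β) ∧
  (∀ α, ψ α = 0 ↔ ¬ IsCoprime α (2 * sqrtm3O * DT)) ∧
  (∀ u α, IsUnit u → ψ (u * α) = ψ α) ∧
  (∀ α β, IsCoprime α (2 * sqrtm3O * DT) → IsCoprime β (2 * sqrtm3O * DT) →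
    2 * sqrtm3O * DT ∣ (α - β) → ψ α * (β : ℂ) = ψ β * (α : ℂ)) ∧
  (∀ α, IsCoprime α (6 * DT) → (6 : Eis) ∣ (α - 1) →
    ψ α = conj ((hex (4 * DT ^ 3) α : Eis) : ℂ) * (α : ℂ))

/-- `C` is a complete set of representatives of the residue classes of `ℤ[τ]` modulo `D`
that are relatively prime to `D`. -/
def IsRepSet (D : Eis) (C : Finset Eis) : Prop :=
  (∀ c ∈ C, IsCoprime c D) ∧
  ∀ x : Eis, IsCoprime x D → ∃! c, c ∈ C ∧ D ∣ (x - c)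

/-! ### The ring `ℤ[τ]` -/

lemma tau_re : tau.re = -1 / 2 := by simp [tau]
lemma tau_im : tau.im = Real.sqrt 3 / 2 := by simp [tau]

lemma tau_sq : tau ^ 2 = -1 - tau := by
  have h : (Real.sqrt 3) ^ 2 = 3 := Real.sq_sqrt (by norm_num)
  apply Complex.ext <;> simp [pow_two, tau_re, tau_im] <;> nlinarith

lemma tauO_sq : tauO ^ 2 = -1 - tauO := Subtype.ext (by simpa [tauO] using tau_sq)

lemma tauO_cube : tauO ^ 3 = 1 := by
  linear_combination (tauO - 1) * tauO_sq

lemma eis_repr (x : Eis) : ∃ a b : ℤ, x = a + b * tauO := by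
  obtain ⟨x, hx⟩ := x
  have : ∃ a b : ℤ, x = a + b * tau := by
    induction hx using Subring.closure_induction with
    | mem x hx => rw [Set.mem_singleton_iff] at hx; exact ⟨0, 1, by simp [hx]⟩
    | zero => exact ⟨0, 0, by simp⟩
    | one => exact ⟨1, 0, by simp⟩
    | add x y _ _ hx hy =>
      obtain ⟨a, b, rfl⟩ := hx
      obtain ⟨c, d, rfl⟩ := hy
      exact ⟨a + c, b + d, by push_cast; ring⟩
    | neg x _ hx =>
      obtain ⟨a, b, rfl⟩ := hx
      exact ⟨-a, -b, by push_cast; ring⟩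
    | mul x y _ _ hx hy =>
      obtain ⟨a, b, rfl⟩ := hx
      obtain ⟨c, d, rfl⟩ := hy
      exact ⟨a * c - b * d, a * d + b * c - b * d, by
        push_cast; linear_combination (b * d : ℂ) * tau_sq⟩
  obtain ⟨a, b, h⟩ := this
  exact ⟨a, b, Subtype.ext (by simpa [tauO] using h)⟩

lemma normSq_repr (a b : ℤ) :
    Complex.normSq ((a + b * tauO : Eis) : ℂ) = ((a * (a - b) + b * b : ℤ) : ℝ) := by
  have h : (Real.sqrt 3) ^ 2 = 3 := Real.sq_sqrt (by norm_num)
  simp [tauO, Complex.normSq_apply, tau_re, tau_im]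
  nlinarith

/-- The norm as a natural number. -/
def nrm (x : Eis) : ℕ := ⌊Complex.normSq (x : ℂ)⌋₊

lemma nrm_cast (x : Eis) : (nrm x : ℝ) = Complex.normSq (x : ℂ) := by
  obtain ⟨a, b, rfl⟩ := eis_repr x
  have h0 := Complex.normSq_nonneg ((a + b * tauO : Eis) : ℂ)
  rw [nrm]
  rw [normSq_repr] at h0 ⊢
  have h1 : (0 : ℤ) ≤ a * (a - b) + b * b := by exact_mod_cast h0
  obtain ⟨m, hm⟩ := Int.eq_ofNat_of_zero_le h1
  rw [hm]; simp

lemma nrm_mul (x y : Eis) : nrm (x * y) = nrm x * nrm y := by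
  have : (nrm (x * y) : ℝ) = nrm x * nrm y := by
    simp only [nrm_cast, Subring.coe_mul, Complex.normSq_mul]
  exact_mod_cast this

lemma nrm_eq_zero {x : Eis} : nrm x = 0 ↔ x = 0 := by
  rw [← Nat.cast_eq_zero (R := ℝ), nrm_cast, Complex.normSq_eq_zero]
  simp

lemma tau_mem : tau ∈ Eis := Subring.subset_closure rfl

lemma approx (z : ℂ) : ∃ w : Eis, Complex.normSq (z - w) < 1 := by
  have h : (Real.sqrt 3) ^ 2 = 3 := Real.sq_sqrt (by norm_num)
  have hp : 0 < Real.sqrt 3 := Real.sqrt_pos.mpr (by norm_num)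
  set b := round (z.im * 2 / Real.sqrt 3) with hb
  set a := round (z.re + b / 2) with ha
  refine ⟨a + b * tauO, ?_⟩
  have h1 := abs_sub_round (z.im * 2 / Real.sqrt 3)
  have h2 := abs_sub_round (z.re + b / 2)
  rw [← hb] at h1
  rw [← ha] at h2
  set s := z.im * 2 / Real.sqrt 3 with hs
  have him : z.im = s * Real.sqrt 3 / 2 := by rw [hs]; field_simp
  have e1 : (z - ((a + b * tauO : Eis) : ℂ)).re = z.re + b / 2 - a := by
    simp [tauO, tau_re, tau_im]; ring
  have e2 : (z - ((a + b * tauO : Eis) : ℂ)).im = (s - b) * Real.sqrt 3 / 2 := by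
    simp [tauO, tau_re, tau_im, him]; ring
  rw [Complex.normSq_apply, e1, e2]
  have q1 : (s - b) ^ 2 ≤ (1 / 2) ^ 2 := sq_le_sq' (by linarith [(abs_le.mp h1).1]) (abs_le.mp h1).2
  have q2 : (z.re + b / 2 - a) ^ 2 ≤ (1 / 2) ^ 2 :=
    sq_le_sq' (by linarith [(abs_le.mp h2).1]) (abs_le.mp h2).2
  have : (s - b) * Real.sqrt 3 / 2 * ((s - b) * Real.sqrt 3 / 2) = (s - b) ^ 2 * 3 / 4 := by
    linear_combination (s - b) ^ 2 / 4 * h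
  rw [this]
  nlinarith

/-- Euclidean division. -/
lemma exists_quot (x y : Eis) (hy : y ≠ 0) : ∃ q : Eis, nrm (x - y * q) < nrm y := by
  obtain ⟨w, hw⟩ := approx ((x : ℂ) / y)
  refine ⟨w, ?_⟩
  have hy' : (y : ℂ) ≠ 0 := by simpa using hy
  have : (nrm (x - y * w) : ℝ) < nrm y := by
    rw [nrm_cast, nrm_cast]
    have e : ((x - y * w : Eis) : ℂ) = y * ((x : ℂ) / y - w) := by
      push_cast; field_simp
    rw [e, Complex.normSq_mul]
    have := Complex.normSq_pos.mpr hy'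
    nlinarith
  exact_mod_cast this

instance eis_pir : IsPrincipalIdealRing Eis := by
  constructor
  intro I
  by_cases hI : I = ⊥
  · exact hI ▸ bot_isPrincipal
  obtain ⟨x0, hx0, hx0'⟩ := Submodule.exists_mem_ne_zero_of_ne_bot hI
  have hex : ∃ n, ∃ x ∈ I, x ≠ 0 ∧ nrm x = n := ⟨_, x0, hx0, hx0', rfl⟩
  classical
  obtain ⟨y, hy, hy0, hyn⟩ := Nat.find_spec hex
  refine ⟨y, le_antisymm ?_ ?_⟩
  · intro x hx
    obtain ⟨q, hq⟩ := exists_quot x y hy0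
    have hr : x - y * q ∈ I := I.sub_mem hx (I.mul_mem_right _ hy)
    by_cases h0 : x - y * q = 0
    · rw [sub_eq_zero] at h0
      rw [h0]
      exact Ideal.mul_mem_right _ _ (Submodule.mem_span_singleton_self y)
    · exact absurd ⟨_, hr, h0, rfl⟩ (Nat.find_min hex (hyn ▸ hq))
  · rw [Submodule.span_le]
    simpa using hy

/-- The integral basis `1, τ`. -/
def eisBasis : Module.Basis (Fin 2) ℤ Eis :=
  Module.Basis.mk (v := ![1, tauO]) (by
    rw [LinearIndependent.pair_iff]
    intro s t h
    have h' : ((s + t * tauO : Eis) : ℂ) = 0 := by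
      have : (s + t * tauO : Eis) = 0 := by simpa using h
      simp [this]
    have hp : 0 < Real.sqrt 3 := Real.sqrt_pos.mpr (by norm_num)
    have h1 := congrArg Complex.im h'
    have h2 := congrArg Complex.re h'
    simp [tauO, tau_re, tau_im] at h1 h2
    have ht : t = 0 := by simpa using h1
    subst ht
    simpa using h2) (by
    intro x _
    obtain ⟨a, b, rfl⟩ := eis_repr x
    rw [Matrix.range_cons, Matrix.range_cons, Matrix.range_empty, Set.union_empty,
      Set.singleton_union, Submodule.mem_span_pair]
    exact ⟨a, b, by simp⟩)

lemma eisBasis_repr (a b : ℤ) : eisBasis.repr (a + b * tauO) = ![a, b] := by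
  have : (a + b * tauO : Eis) = ∑ i, (![a, b] i) • eisBasis i := by
    simp [eisBasis, Fin.sum_univ_two]
  rw [this, Module.Basis.repr_sum_self]

instance : Module.Free ℤ Eis := Module.Free.of_basis eisBasis
instance : Module.Finite ℤ Eis := Module.Finite.of_basis eisBasis

lemma card_quot (p : Eis) : Nat.card (Eis ⧸ Ideal.span {p}) = nrm p := by
  have h := Ideal.absNorm_span_singleton p
  rw [Ideal.absNorm_apply, Submodule.cardQuot_apply] at h
  rw [h]
  obtain ⟨a, b, rfl⟩ := eis_repr p
  have e0 : (a + b * tauO : Eis) * 1 = a + b * tauO := by ring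
  have e1 : (a + b * tauO : Eis) * tauO = ((-b : ℤ) : Eis) + ((a - b : ℤ) : Eis) * tauO := by
    push_cast; linear_combination (b : Eis) * tauO_sq
  have hdet : Algebra.norm ℤ (a + b * tauO : Eis) = a * (a - b) + b * b := by
    rw [Algebra.norm_eq_matrix_det eisBasis, Matrix.det_fin_two]
    simp only [Algebra.leftMulMatrix_eq_repr_mul]
    have b0 : eisBasis 0 = 1 := by simp [eisBasis]
    have b1 : eisBasis 1 = tauO := by simp [eisBasis]
    rw [b0, b1, e0, e1, eisBasis_repr, eisBasis_repr]
    simp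
  have h1 : ((nrm (a + b * tauO : Eis) : ℤ) : ℝ) = ((a * (a - b) + b * b : ℤ) : ℝ) := by
    rw [← normSq_repr, ← nrm_cast]; simp
  have h2 : (nrm (a + b * tauO : Eis) : ℤ) = a * (a - b) + b * b := by exact_mod_cast h1
  rw [hdet, ← h2]; simp

lemma eis_isUnit_of_nrm {x : Eis} (h : nrm x = 1) : IsUnit x := by
  have := card_quot x
  rw [h, Nat.card_eq_one_iff_unique] at this
  have h2 := this.1
  rwa [Ideal.Quotient.subsingleton_iff, Ideal.span_singleton_eq_top] at h2

lemma nrm_of_isUnit {x : Eis} (h : IsUnit x) : nrm x = 1 := by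
  obtain ⟨y, hy⟩ := h.exists_right_inv
  have := nrm_mul x y
  rw [hy] at this
  have h1 : nrm 1 = 1 := by simp [nrm]
  rw [h1] at this
  exact Nat.eq_one_of_mul_eq_one_right this.symm

lemma unit_eq_one {u : Eis} (hu : IsUnit u) (h : (3 : Eis) ∣ u - 1) : u = 1 := by
  obtain ⟨v, hv⟩ := h
  have h1 : Complex.normSq (u : ℂ) = 1 := by rw [← nrm_cast, nrm_of_isUnit hu]; simp
  have h3 : nrm (3 : Eis) = 9 := by
    have : (nrm (3 : Eis) : ℝ) = 9 := by
      rw [nrm_cast, Complex.normSq_apply]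
      have : ((3 : Eis) : ℂ) = 3 := rfl
      rw [this]; norm_num
    exact_mod_cast this
  have h4 : Complex.normSq ((u - 1 : Eis) : ℂ) < 9 := by
    rw [Complex.normSq_apply] at h1 ⊢
    simp
    nlinarith [sq_nonneg ((u : ℂ).re + 1), sq_nonneg (u : ℂ).im]
  rw [hv, ← nrm_cast, nrm_mul, h3] at h4
  have h5 : 9 * nrm v < 9 := by exact_mod_cast h4
  have h6 : v = 0 := nrm_eq_zero.mp (by omega)
  rw [h6, mul_zero] at hv
  exact sub_eq_zero.mp hv

/-! ### Roots of unity modulo a prime -/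

lemma root_unique {p z w : Eis} (hp : Prime p) (h6 : IsCoprime p 6) (hz : z ^ 6 = 1)
    (hw : w ^ 6 = 1) (h : p ∣ z - w) : z = w := by
  by_contra hne
  have hs : z ^ 5 + z ^ 4 * w + z ^ 3 * w ^ 2 + z ^ 2 * w ^ 3 + z * w ^ 4 + w ^ 5 = 0 := by
    apply mul_left_cancel₀ (sub_ne_zero.mpr hne)
    linear_combination hz - hw
  have h1 : p ∣ 6 * w ^ 5 := by
    obtain ⟨t, ht⟩ := h
    refine ⟨-t * (z ^ 4 + 2 * z ^ 3 * w + 3 * z ^ 2 * w ^ 2 + 4 * z * w ^ 3 + 5 * w ^ 4), ?_⟩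
    linear_combination hs - (z ^ 4 + 2 * z ^ 3 * w + 3 * z ^ 2 * w ^ 2 + 4 * z * w ^ 3 +
      5 * w ^ 4) * ht
  have h2 : p ∣ 6 := by
    have : (6 : Eis) = 6 * w ^ 5 * w := by linear_combination -6 * hw
    rw [this]; exact h1.mul_right _
  exact hp.not_isUnit (h6.isUnit_of_dvd' dvd_rfl h2)

lemma pow_six_of_cube {z : Eis} (h : z ^ 3 = 1) : z ^ 6 = 1 := by
  have : z ^ 6 = (z ^ 3) ^ 2 := by ring
  rw [this, h, one_pow]

lemma conj_of_cube {z : Eis} (h : z ^ 3 = 1) : conj (z : ℂ) = ((z ^ 2 : Eis) : ℂ) := by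
  have h1 : (z : ℂ) ^ 3 = 1 := by exact_mod_cast congrArg (Subtype.val) h
  have hn : ‖(z : ℂ)‖ = 1 := by
    have := congrArg norm h1
    rw [norm_pow, norm_one] at this
    exact (pow_eq_one_iff_of_nonneg (norm_nonneg _) (by norm_num)).mp this
  have h2 : (z : ℂ) * conj (z : ℂ) = 1 := by
    rw [Complex.mul_conj, Complex.normSq_eq_norm_sq, hn]; simp
  push_cast
  have h0 : (z : ℂ) ≠ 0 := by
    intro h0; rw [h0] at h1; norm_num at h1
  apply mul_left_cancel₀ h0
  rw [h2, ← h1]; ring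

section Field

variable {F : Type} [Field F] [Fintype F]

/-- If `2 ≠ 0` and `3 ≠ 0` in `F` and `F` has a cube root of unity, then `6 ∣ #F - 1`. -/
lemma six_dvd_card (t : F) (ht : t ^ 2 = -1 - t) (h2 : (2 : F) ≠ 0) (h3 : (3 : F) ≠ 0) :
    6 ∣ Fintype.card F - 1 := by
  classical
  have ht3 : t ^ 3 = 1 := by linear_combination (t - 1) * ht
  have ht0 : t ≠ 0 := by rintro rfl; norm_num at ht3
  have ht1 : t ≠ 1 := by
    rintro rfl
    apply h3
    linear_combination ht
  rw [← Fintype.card_units]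
  have d3 : 3 ∣ Fintype.card Fˣ := by
    have : orderOf (Units.mk0 t ht0) = 3 := by
      apply orderOf_eq_prime
      · ext; simpa using ht3
      · intro h; apply ht1; simpa using congrArg Units.val h
    rw [← this]; exact orderOf_dvd_card
  have d2 : 2 ∣ Fintype.card Fˣ := by
    have : orderOf (-1 : Fˣ) = 2 := by
      apply orderOf_eq_prime
      · simp
      · intro h
        apply h2
        have := congrArg Units.val h
        push_cast at this
        linear_combination -this
    rw [← this]; exact orderOf_dvd_card
  omega

lemma sum_beta (k : ℕ) (hk : 3 * k = Fintype.card F - 1) (hk0 : 0 < k) :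
    ∑ x : F, x ^ k * (1 - x) ^ k = 0 := by
  have : ∀ x : F, x ^ k * (1 - x) ^ k =
      ∑ j ∈ Finset.range (k + 1), (((-1) ^ j * (k.choose j : F)) * x ^ (k + j)) := by
    intro x
    have e : (1 - x) ^ k = (-x + 1) ^ k := by ring
    rw [e, add_pow, Finset.mul_sum]
    apply Finset.sum_congr rfl
    intro j _
    rw [neg_pow, pow_add]; ring
  simp_rw [this]
  rw [Finset.sum_comm]
  apply Finset.sum_eq_zero
  intro j hj
  rw [← Finset.mul_sum, FiniteField.sum_pow_lt_card_sub_one, mul_zero]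
  have := Finset.mem_range.mp hj
  omega

/-- The involution `x ↦ 1 - x` on Jacobi sums. -/
lemma jacobi_mod_two (χ : MulChar F Eis) (h2 : (2 : F) ≠ 0) :
    (2 : Eis) ∣ jacobiSum χ χ - χ (2⁻¹) * χ (2⁻¹) := by
  classical
  have key : ((jacobiSum χ χ - χ (2⁻¹) * χ (2⁻¹) : Eis) : Eis ⧸ Ideal.span {(2 : Eis)}) = 0 := by
    have e : jacobiSum χ χ - χ (2⁻¹) * χ (2⁻¹) =
        ∑ x ∈ Finset.univ.erase (2⁻¹ : F), χ x * χ (1 - x) := by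
      rw [jacobiSum, ← Finset.add_sum_erase _ _ (Finset.mem_univ (2⁻¹ : F))]
      have : (1 : F) - 2⁻¹ = 2⁻¹ := by field_simp; ring
      rw [this]; ring
    rw [e, map_sum]
    refine Finset.sum_involution (fun x _ => 1 - x) ?_ ?_ ?_ (fun x _ => sub_sub_cancel 1 x)
    · intro x _
      rw [sub_sub_cancel, ← map_add, Ideal.Quotient.eq_zero_iff_mem, Ideal.mem_span_singleton]
      exact ⟨χ x * χ (1 - x), by ring⟩
    · intro x hx _ hxx
      rw [Finset.mem_erase] at hx
      apply hx.1
      field_simp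
      linear_combination -hxx
    · intro x hx
      simp only [Finset.mem_erase, Finset.mem_univ, and_true] at hx ⊢
      intro h; apply hx
      have : x = 1 - 2⁻¹ := by rw [← h]; ring
      rw [this]; field_simp; ring
  rwa [Ideal.Quotient.eq_zero_iff_mem, Ideal.mem_span_singleton] at key

end Field

lemma tauO_primitive : IsPrimitiveRoot tauO 3 := by
  apply IsPrimitiveRoot.mk_of_lt _ (by norm_num) tauO_cube
  have him : tau.im ≠ 0 := by rw [tau_im]; positivity
  have h1 : tauO ≠ 1 := by
    intro h; apply him
    have : tau = 1 := congrArg Subtype.val h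
    rw [this]; simp
  intro l hl hl3
  interval_cases l
  · simpa using h1
  · intro h
    apply h1
    linear_combination -tauO * h + tauO_cube

section Field

variable {F : Type} [Field F] [Fintype F]

/-- The cubic residue character modulo `p`. -/
lemma exists_cubic_char {p : Eis} (hp : Prime p) (h6 : IsCoprime p 6) (f : Eis →+* F)
    (hf : ∀ x, f x = 0 ↔ p ∣ x) (k : ℕ) (hk : 3 * k = Fintype.card F - 1) :
    ∃ χ : MulChar F Eis, χ ^ 3 = 1 ∧ ∀ a : F, a ≠ 0 → f (χ a) = a ^ k ∧ χ a ^ 3 = 1 := by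
  have ex : ∀ a : Fˣ, ∃ z : Eisˣ, z ^ 3 = 1 ∧ f (z : Eis) = (a : F) ^ k := by
    intro a
    have hb : ((a : F) ^ k) ^ 3 = 1 := by
      rw [← pow_mul, mul_comm, hk, FiniteField.pow_card_sub_one_eq_one _ a.ne_zero]
    set b := (a : F) ^ k
    have ht : f tauO ^ 2 = -1 - f tauO := by simpa using congrArg f tauO_sq
    have hprod : (b - 1) * ((b - f tauO) * (b - f tauO ^ 2)) = 0 := by
      have ht3 : f tauO ^ 3 = 1 := by simpa using congrArg f tauO_cube
      linear_combination hb + (b - b ^ 2) * ht  - (1 - b) * ht3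
    let T : Eisˣ := Units.ofPowEqOne tauO 3 tauO_cube (by norm_num)
    have hT : (T : Eis) = tauO := rfl
    have hT3 : T ^ 3 = 1 := by ext1; push_cast; rw [hT, tauO_cube]
    rcases mul_eq_zero.mp hprod with h | h
    · exact ⟨1, by simp, by simpa using (sub_eq_zero.mp h).symm⟩
    rcases mul_eq_zero.mp h with h | h
    · exact ⟨T, hT3, by rw [hT]; exact (sub_eq_zero.mp h).symm⟩
    · exact ⟨T ^ 2, by rw [← pow_mul, mul_comm, pow_mul, hT3, one_pow],
        by push_cast; rw [hT, map_pow]; exact (sub_eq_zero.mp h).symm⟩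
  choose g hg3 hgf using ex
  have uniq : ∀ z w : Eisˣ, z ^ 3 = 1 → w ^ 3 = 1 → f (z : Eis) = f (w : Eis) → z = w := by
    intro z w hz hw h
    ext1
    apply root_unique hp h6
    · exact pow_six_of_cube (by simpa using congrArg Units.val hz)
    · exact pow_six_of_cube (by simpa using congrArg Units.val hw)
    · rw [← hf, map_sub, h, sub_self]
  let G : Fˣ →* Eisˣ :=
    { toFun := g
      map_one' := uniq _ _ (hg3 _) (by simp) (by rw [hgf]; simp)
      map_mul' := fun a b => uniq _ _ (hg3 _) (by rw [mul_pow, hg3, hg3, one_mul]) (by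
        rw [hgf, Units.val_mul, Units.val_mul, map_mul, hgf, hgf, mul_pow]) }
  have hG : ∀ a : Fˣ, MulChar.ofUnitHom G (a : F) = (g a : Eis) := fun a =>
    MulChar.ofUnitHom_coe G a
  refine ⟨MulChar.ofUnitHom G, ?_, ?_⟩
  · ext a
    rw [MulChar.pow_apply_coe, hG, MulChar.one_apply_coe, ← Units.val_pow_eq_pow_val, hg3]
    simp
  · intro a ha
    have := hG (Units.mk0 a ha)
    rw [Units.val_mk0] at this
    rw [this, hgf]
    exact ⟨rfl, by rw [← Units.val_pow_eq_pow_val, hg3]; simp⟩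

/-- Cubic reciprocity for `2`: the number `-J(χ,χ)`. -/
lemma jacobi_main {p : Eis} (hp : Prime p) (h6 : IsCoprime p 6) (f : Eis →+* F)
    (hf : ∀ x, f x = 0 ↔ p ∣ x) (k : ℕ) (hk : 3 * k = Fintype.card F - 1)
    (hcard : Fintype.card F = nrm p) :
    ∃ β ω : Eis, Associated p β ∧ (3 : Eis) ∣ β - 1 ∧ ω ^ 3 = 1 ∧ (2 : Eis) ∣ β - ω ∧
      f ω = 2 ^ k := by
  have hu6 : f 6 ≠ 0 := fun h => hp.not_isUnit (h6.isUnit_of_dvd' dvd_rfl ((hf _).mp h))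
  have h2 : (2 : F) ≠ 0 := by
    intro h; apply hu6
    have : f 6 = 2 * 3 := by rw [map_ofNat]; norm_num
    rw [this, h, zero_mul]
  obtain ⟨χ, hχ3, hχ⟩ := exists_cubic_char hp h6 f hf k hk
  have hc1 : 1 < Fintype.card F := Fintype.one_lt_card
  have hk0 : 0 < k := by omega
  -- nontriviality
  have hχ1 : χ ≠ 1 := by
    obtain ⟨g, hg⟩ := IsCyclic.exists_generator (α := Fˣ)
    intro h
    have e := (hχ g g.ne_zero).1
    rw [h, MulChar.one_apply_coe, map_one] at e
    have e' : g ^ k = 1 := by ext; push_cast; exact e.symm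
    have d := orderOf_dvd_of_pow_eq_one e'
    classical
    rw [orderOf_eq_card_of_forall_mem_zpowers hg, Nat.card_eq_fintype_card] at d
    rw [Fintype.card_units, ← hk] at d
    have := Nat.le_of_dvd hk0 d
    omega
  have hχχ : χ * χ ≠ 1 := by
    intro h
    apply hχ1
    have : χ ^ 3 = χ * (χ * χ) := by rw [pow_succ, pow_two]; exact mul_comm _ _
    rw [this, h, mul_one] at hχ3
    exact hχ3
  set J := jacobiSum χ χ with hJ
  -- `J ≡ -1 mod 3`
  obtain ⟨z, -, hz⟩ := exists_jacobiSum_eq_neg_one_add (n := 3) (by norm_num) hχ3 hχ3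
    ⟨k, hk.symm⟩ tauO_primitive
  -- `p ∣ J`
  have hpJ : p ∣ J := by
    rw [← hf, hJ, jacobiSum, map_sum, ← sum_beta k hk hk0]
    apply Finset.sum_congr rfl
    intro x _
    have hall : ∀ y : F, f (χ y) = y ^ k := by
      intro y
      by_cases hy : y = 0
      · rw [hy, MulChar.map_zero, map_zero, zero_pow hk0.ne']
      · exact (hχ y hy).1
    rw [map_mul, hall, hall]
  -- `|J|² = #F`
  have hnorm : Complex.normSq (J : ℂ) = Fintype.card F := by
    have hinj : Function.Injective Eis.subtype := Subtype.val_injective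
    let χ' := χ.ringHomComp Eis.subtype
    have n1 : χ' ≠ 1 := (MulChar.ringHomComp_ne_one_iff hinj).mpr hχ1
    have n2 : χ' * χ' ≠ 1 := by
      have := (MulChar.ringHomComp_ne_one_iff hinj).mpr hχχ
      rwa [MulChar.ringHomComp_mul] at this
    have hrc : ringChar ℂ ≠ ringChar F := by
      rw [ringChar.eq_zero]
      exact (CharP.ringChar_ne_zero_of_finite F).symm
    have hJJ := jacobiSum_mul_jacobiSum_inv hrc n1 n1 n2
    have e1 : jacobiSum χ' χ' = (J : ℂ) := jacobiSum_ringHomComp χ χ Eis.subtype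
    have hconj : ∀ x, χ'⁻¹ x = conj (χ' x) := by
      intro x
      by_cases hx : x = 0
      · rw [hx, MulChar.map_zero, MulChar.map_zero, map_zero]
      · have c3 := (hχ x hx).2
        have hv : χ' x = ((χ x : Eis) : ℂ) := rfl
        rw [hv, conj_of_cube c3, MulChar.inv_apply_eq_inv', hv]
        have c3' : ((χ x : Eis) : ℂ) ^ 3 = 1 := by exact_mod_cast congrArg (Subtype.val) c3
        apply inv_eq_of_mul_eq_one_right
        push_cast
        rw [← c3']; ring
    have e2 : jacobiSum χ'⁻¹ χ'⁻¹ = conj (J : ℂ) := by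
      rw [← e1, jacobiSum, jacobiSum, map_sum]
      apply Finset.sum_congr rfl
      intro x _
      rw [hconj, hconj, map_mul]
    rw [e1, e2, Complex.mul_conj] at hJJ
    exact_mod_cast hJJ
  have hnJ : nrm J = nrm p := by
    have : (nrm J : ℝ) = nrm p := by rw [nrm_cast, hnorm, hcard]
    exact_mod_cast this
  have hassoc : Associated p J := by
    obtain ⟨u, hu⟩ := hpJ
    rw [hu, nrm_mul] at hnJ
    have hp0 : nrm p ≠ 0 := fun h => hp.ne_zero (nrm_eq_zero.mp h)
    have hu1 : nrm u = 1 := Nat.eq_of_mul_eq_mul_left (Nat.pos_of_ne_zero hp0) (by omega)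
    obtain ⟨v, hv⟩ := eis_isUnit_of_nrm hu1
    exact ⟨v, by rw [hv, hu]⟩
  have hmod2 := jacobi_mod_two χ h2
  rw [← hJ] at hmod2
  refine ⟨-J, χ 2, hassoc.neg_right, ?_, (hχ 2 h2).2, ?_, (hχ 2 h2).1⟩
  · rw [hJ, hz]
    exact ⟨z * tauO, by linear_combination -z * tauO_sq⟩
  · have e : χ (2⁻¹) * χ (2⁻¹) = χ 2 := by
      have a1 : χ 2 * χ 2⁻¹ = 1 := by rw [← map_mul, mul_inv_cancel₀ h2, map_one]
      have a2 := (hχ 2 h2).2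
      linear_combination (χ 2 * (χ 2 * χ 2⁻¹ + 1)) * a1 - χ 2⁻¹ * χ 2⁻¹ * a2
    rw [e] at hmod2
    obtain ⟨t, ht⟩ := hmod2
    exact ⟨-t - χ 2, by linear_combination -ht⟩

end Field

lemma prime_case {p DT : Eis} (hp : Prime p) (h : IsCoprime p (6 * DT))
    (q : Eis → Eis → Eis) (hq : IsQuadSym q) (hs : Eis → Eis → Eis) (hhs : IsHexSym hs) :
    ∃ β ω : Eis, Associated p β ∧ (3 : Eis) ∣ β - 1 ∧ ω ^ 3 = 1 ∧ (2 : Eis) ∣ β - ω ∧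
      (q DT p = 1 ∨ q DT p = -1) ∧ hs (4 * DT ^ 3) p = q DT p * ω := by
  have h6 : IsCoprime p 6 := h.of_mul_right_left
  have hD : IsCoprime p DT := h.of_mul_right_right
  have e6 : (6 : Eis) = 2 * 3 := by norm_num
  have h2 : IsCoprime p 2 := by rw [e6] at h6; exact h6.of_mul_right_left
  have h3 : IsCoprime p 3 := by rw [e6] at h6; exact h6.of_mul_right_right
  have hmax : (Ideal.span {p}).IsMaximal :=
    PrincipalIdealRing.isMaximal_of_irreducible hp.irreducible
  let _ : Field (Eis ⧸ Ideal.span {p}) := Ideal.Quotient.field _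
  have hn0 : nrm p ≠ 0 := fun h => hp.ne_zero (nrm_eq_zero.mp h)
  have hfin : Finite (Eis ⧸ Ideal.span {p}) := Nat.finite_of_card_ne_zero (by rwa [card_quot])
  let _ : Fintype (Eis ⧸ Ideal.span {p}) := Fintype.ofFinite _
  have hcard : Fintype.card (Eis ⧸ Ideal.span {p}) = nrm p := by
    rw [← Nat.card_eq_fintype_card, card_quot]
  let f : Eis →+* Eis ⧸ Ideal.span {p} := Ideal.Quotient.mk _
  have hf : ∀ x, f x = 0 ↔ p ∣ x := fun x => by
    rw [Ideal.Quotient.eq_zero_iff_mem, Ideal.mem_span_singleton]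
  have f2 : f 2 ≠ 0 := fun h => hp.not_isUnit (h2.isUnit_of_dvd' dvd_rfl ((hf _).mp h))
  have f3 : f 3 ≠ 0 := fun h => hp.not_isUnit (h3.isUnit_of_dvd' dvd_rfl ((hf _).mp h))
  rw [map_ofNat] at f2 f3
  obtain ⟨m, hm⟩ := six_dvd_card (f tauO) (by simpa using congrArg f tauO_sq) f2 f3
  obtain ⟨β, ω, hb1, hb2, hw, hb3, hfw⟩ := jacobi_main hp h6 f hf (2 * m) (by omega) hcard
  have hcop : IsCoprime (4 * DT ^ 3) p := by
    have : (4 : Eis) = 2 * 2 := by norm_num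
    rw [this]
    exact ((h2.mul_right h2).mul_right hD.pow_right).symm
  obtain ⟨hs6, hsm⟩ := hhs.2.2 _ p hp h6 hcop
  obtain ⟨hq1, hqm⟩ := hq.2.2 DT p hp h2 hD.symm
  have a1 := hsm (nrm p) (nrm_cast p).symm
  have a2 := hqm (nrm p) (nrm_cast p).symm
  rw [← hcard, hm] at a1 a2
  have d1 : 6 * m / 6 = m := by omega
  have d2 : 6 * m / 2 = 3 * m := by omega
  rw [d1, ← hf, map_sub, sub_eq_zero] at a1
  rw [d2, ← hf, map_sub, sub_eq_zero] at a2
  refine ⟨β, ω, hb1, hb2, hw, hb3, hq1, ?_⟩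
  apply root_unique hp h6 hs6
  · rw [mul_pow, pow_six_of_cube hw, mul_one]
    rcases hq1 with h | h <;> rw [h] <;> ring
  · rw [← hf, map_sub, map_mul, a1, a2, hfw, sub_eq_zero]
    simp only [map_pow, map_mul, map_ofNat]
    have : (4 : Eis ⧸ Ideal.span {p}) = 2 ^ 2 := by norm_num
    rw [this, mul_pow, ← pow_mul, ← pow_mul]; ring

lemma general_case {DT : Eis}
    (q : Eis → Eis → Eis) (hq : IsQuadSym q) (hs : Eis → Eis → Eis) (hhs : IsHexSym hs)
    (α : Eis) (h : IsCoprime α (6 * DT)) (h0 : α ≠ 0) :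
    ∃ β ω : Eis, Associated α β ∧ (3 : Eis) ∣ β - 1 ∧ ω ^ 3 = 1 ∧ (2 : Eis) ∣ β - ω ∧
      (q DT α = 1 ∨ q DT α = -1) ∧ hs (4 * DT ^ 3) α = q DT α * ω := by
  induction α using UniqueFactorizationMonoid.induction_on_prime with
  | h₁ => exact absurd rfl h0
  | h₂ u hu =>
    refine ⟨1, 1, associated_one_iff_isUnit.mpr hu, by simp, by simp, by simp, ?_, ?_⟩
    · left; exact hq.2.1 _ _ hu
    · rw [hq.2.1 _ _ hu, hhs.2.1 _ _ hu, mul_one]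
  | h₃ a p ha hp ih =>
    obtain ⟨β, ω, b1, b2, b3, b4, b5, b6⟩ := ih h.of_mul_left_right ha
    obtain ⟨β', ω', c1, c2, c3, c4, c5, c6⟩ := prime_case hp h.of_mul_left_left q hq hs hhs
    refine ⟨β' * β, ω' * ω, c1.mul_mul b1, ?_, ?_, ?_, ?_, ?_⟩
    · have : β' * β - 1 = β' * (β - 1) + (β' - 1) := by ring
      rw [this]; exact dvd_add (b2.mul_left _) c2
    · rw [mul_pow, b3, c3, one_mul]
    · have : β' * β - ω' * ω = β' * (β - ω) + (β' - ω') * ω := by ring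
      rw [this]; exact dvd_add (b4.mul_left _) (c4.mul_right _)
    · rw [hq.1]
      rcases b5 with h | h <;> rcases c5 with h' | h' <;> rw [h, h'] <;> simp
    · rw [hq.1, hhs.1, b6, c6]; ring

lemma not_two_dvd_three : ¬ (2 : Eis) ∣ 3 := by
  intro h
  have hu : IsUnit (2 : Eis) := by
    obtain ⟨t, ht⟩ := h
    exact IsUnit.of_mul_eq_one (t - 1) (by linear_combination -ht)
  have h1 : (nrm (2 : Eis) : ℝ) = 4 := by
    rw [nrm_cast, Complex.normSq_apply]
    have : ((2 : Eis) : ℂ) = 2 := rfl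
    rw [this]; norm_num
  rw [nrm_of_isUnit hu] at h1
  norm_num at h1

lemma cube_root_eq_one {w : Eis} (h : w ^ 3 = 1) (h2 : (2 : Eis) ∣ 1 - w) : w = 1 := by
  by_contra hne
  have hs : w ^ 2 + w + 1 = 0 := by
    apply mul_left_cancel₀ (sub_ne_zero.mpr hne)
    linear_combination h
  obtain ⟨t, ht⟩ := h2
  exact not_two_dvd_three ⟨t * (w + 2), by linear_combination hs + (w + 2) * ht⟩

/-- From the **proof of Theorem 1.1** in [Qiu]: with `D = π₁⋯πₙ` (`πₖ ≡ 1 (mod 12)`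
distinct primes of `ℤ[τ]`), `D_T` a subproduct of the `πₖ`, and `c ∈ O_K` relatively
prime to `D`, the Hecke character `ψ_{D_T³}` attached to `y² = x³ + D_T³` — given on
`α ≡ 1 (mod 6)` prime to `6·D_T` by `ψ_{D_T³}(α) = conj((4D_T³/α)₆)·α` — satisfies
`ψ_{D_T³}(6c + D) = (D_T/(6c+D))₂ · (6c + D)`. -/
theorem hecke_character_value_at_shifted_rep
    (n : ℕ) (prm : Fin n → Eis)
    (hprime : ∀ k, Prime (prm k))
    (hdistinct : ∀ j k, j ≠ k → prm j ≠ prm k)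
    (hcong : ∀ k, (12 : Eis) ∣ (prm k - 1))
    (T : Finset (Fin n))
    (D DT : Eis) (hD : D = ∏ k, prm k) (hDT : DT = ∏ k ∈ T, prm k)
    (c : Eis) (hc : IsCoprime c D)
    (quadSym : Eis → Eis → Eis) (hquad : IsQuadSym quadSym)
    (hexSym : Eis → Eis → Eis) (hhex : IsHexSym hexSym)
    (ψ : Eis → ℂ)
    (hψval : ∀ α, IsCoprime α (6 * DT) → (6 : Eis) ∣ (α - 1) →
      ψ α = conj ((hexSym (4 * DT ^ 3) α : Eis) : ℂ) * (α : ℂ)) :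
    ψ (6 * c + D) = ((quadSym DT (6 * c + D) : Eis) : ℂ) * ((6 * c + D : Eis) : ℂ) := by
  have hprod : ∀ s : Finset (Fin n), (12 : Eis) ∣ (∏ k ∈ s, prm k) - 1 := by
    classical
    intro s
    induction s using Finset.induction_on with
    | empty => simp
    | insert a s ha ih =>
      rw [Finset.prod_insert ha]
      have : prm a * ∏ k ∈ s, prm k - 1 = prm a * ((∏ k ∈ s, prm k) - 1) + (prm a - 1) := by ring
      rw [this]; exact dvd_add (ih.mul_left _) (hcong a)
  have hD12 : (12 : Eis) ∣ D - 1 := hD ▸ hprod Finset.univ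
  have hDTD : DT ∣ D := by
    rw [hD, hDT]; exact Finset.prod_dvd_prod_of_subset _ _ _ (Finset.subset_univ T)
  obtain ⟨s, hs⟩ := hD12
  have hα1 : (6 : Eis) ∣ (6 * c + D) - 1 := ⟨c + 2 * s, by linear_combination hs⟩
  have hD6 : IsCoprime (6 : Eis) D := ⟨-2 * s, 1, by linear_combination hs⟩
  have hα6 : IsCoprime (6 * c + D) 6 := by
    obtain ⟨t, ht⟩ := hα1
    exact ⟨1, -t, by linear_combination ht⟩
  have hαD : IsCoprime (6 * c + D) D := by
    have : IsCoprime (6 * c) D := hD6.mul_left hc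
    simpa using this.add_mul_left_left 1
  have hα : IsCoprime (6 * c + D) (6 * DT) :=
    hα6.mul_right (hαD.of_isCoprime_of_dvd_right hDTD)
  have hα0 : 6 * c + D ≠ 0 := by
    intro h0
    rw [h0, isCoprime_zero_left] at hα6
    exact not_two_dvd_three ((isUnit_of_dvd_unit ⟨3, by norm_num⟩ hα6).dvd)
  rw [hψval _ hα hα1]
  obtain ⟨β, ω, b1, b2, b3, b4, b5, b6⟩ := general_case quadSym hquad hexSym hhex _ hα hα0
  generalize 6 * c + D = α at *
  have hβ : β = α := by
    obtain ⟨u, hu⟩ := b1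
    have h3 : (3 : Eis) ∣ α - 1 := Dvd.dvd.trans ⟨2, by norm_num⟩ hα1
    have : (u : Eis) = 1 := by
      apply unit_eq_one u.isUnit
      have e : (u : Eis) - 1 = (β - 1) - (α - 1) * u := by rw [← hu]; ring
      rw [e]; exact dvd_sub b2 (h3.mul_right _)
    rw [← hu, this, mul_one]
  subst hβ
  have hω : ω = 1 := by
    apply cube_root_eq_one b3
    have h2 : (2 : Eis) ∣ β - 1 := Dvd.dvd.trans ⟨3, by norm_num⟩ hα1
    have e : 1 - ω = (β - ω) - (β - 1) := by ring
    rw [e]; exact dvd_sub b4 h2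
  rw [b6, hω, mul_one]
  rcases b5 with h | h <;> rw [h] <;> simp
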